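/- Let σ, ν ∈ S_n with σ ≤ ν in Bruhat order and let 1 ≤ k < n. Then the intersection of the coset σ(S_k × S_{n-k}) (all permutations μ with {μ(1),...,μ(k)} = {σ(1),...,σ(k)}) with the Bruhat interval [σ, ν] is itself a Bruhat interval; in particular it has a unique maximal element. -/

import Mathlib

/-- Number of inversions (Coxeter length) of a permutation of `Fin n`. -/
def invCount (n : ℕ) (σ : Equiv.Perm (Fin n)) : ℕ :=
  (Finset.univ.filter fun p : Fin n × Fin n => p.1 < p.2 ∧ σ p.2 < σ p.1).card

/-- The simple transposition `sᵢ = (i, i+1)` (and `1` at the out-of-range index). -/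
def sgen (n : ℕ) (i : Fin n) : Equiv.Perm (Fin n) :=
  if h : (i : ℕ) + 1 < n then Equiv.swap i ⟨(i : ℕ) + 1, h⟩ else 1

/-- `l` is a reduced word for `σ`. -/
def IsReducedWord (n : ℕ) (l : List (Fin n)) (σ : Equiv.Perm (Fin n)) : Prop :=
  (∀ i ∈ l, (i : ℕ) + 1 < n) ∧ (l.map (sgen n)).prod = σ ∧ l.length = invCount n σ

/-- The Bruhat order as the subword order on reduced expressions. -/
def bruhatLE (n : ℕ) (μ σ : Equiv.Perm (Fin n)) : Prop :=
  ∃ l l' : List (Fin n), IsReducedWord n l' σ ∧ IsReducedWord n l μ ∧ l.Sublist l'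

/-!
For adjacent values `i ⋖ j`, let `s = (i j)` and call `raise w` the larger and `lower w` the smaller
of `w` and `s w`. Among the ranks `w[p, q] = #{x < p | q ≤ w x}` only those with `q = j` change, and
they become the average of `w[p, i]` and `w[p, j + 1]`, rounded up for `raise w` and down for
`lower w`. Hence `lower` and `raise` form a Galois connection for the comparison of ranks, which
identifies this order with the subword order. Both operations also act on each row `w[p, ·]`
separately, so they map cosets of a parabolic subgroup, on which certain rows are constant, into
cosets; the same rows show that cosets are convex.

Build `ν` from `1` by raising. If `η` is the largest element below `w` of the coset of `lower σ`,
then for `y` in the coset of `σ` one has `y ≤ raise w ↔ lower y ≤ w ↔ lower y ≤ η ↔ y ≤ raise η`. So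
`raise η` is the largest element below `raise w` of the coset of `σ`, unless it leaves that coset;
in that case every `y` in the coset satisfies `lower y = y`, and `η` itself does the job.
-/

namespace Bruhat

open Equiv Finset

variable {n : ℕ} {i j : Fin n} {w x y z : Perm (Fin n)} {p q : ℕ}

lemma val_add_one_eq (hij : i ⋖ j) : (i : ℕ) + 1 = j := by simpa using hij

section Rank

/-- The number `w[p, q]` of positions `x < p` at which `w` takes a value `≥ q`. Comparing these
numbers gives the tableau criterion for the Bruhat order. Both bounds are natural numbers, so that
`p = n` and `q = n` are allowed. -/
def rank (w : Perm (Fin n)) (p q : ℕ) : ℕ :=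
  #{x : Fin n | (x : ℕ) < p ∧ q ≤ (w x : ℕ)}

lemma rank_eq_rank_succ_add (w : Perm (Fin n)) (p : ℕ) (v : Fin n) :
    rank w p v = rank w p (v + 1) + if (w⁻¹ v : ℕ) < p then 1 else 0 := by
  have hsingle : (if (w⁻¹ v : ℕ) < p then 1 else 0) =
      ∑ x : Fin n, if x = w⁻¹ v then if (x : ℕ) < p then 1 else 0 else 0 := by simp
  rw [rank, rank, card_filter, card_filter, hsingle, ← sum_add_distrib]
  refine sum_congr rfl fun x _ => ?_
  have hx : x = w⁻¹ v ↔ (w x : ℕ) = v := by rw [Perm.eq_inv_iff_eq, Fin.ext_iff]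
  simp only [hx]
  split_ifs <;> omega

lemma inv_lt_iff_rank_eq_succ (v : Fin n) :
    (w⁻¹ v : ℕ) < p ↔ rank w p v = rank w p (v + 1) + 1 := by
  have := rank_eq_rank_succ_add w p v
  split_ifs at this <;> omega

lemma rank_injective : Function.Injective (rank : Perm (Fin n) → ℕ → ℕ → ℕ) := by
  intro x y hxy
  refine inv_injective (Equiv.ext fun v => Fin.ext (eq_of_forall_gt_iff fun p => ?_))
  rw [inv_lt_iff_rank_eq_succ, inv_lt_iff_rank_eq_succ, hxy]

lemma rank_eq_ncard (w : Perm (Fin n)) (p q : ℕ) :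
    rank w p q = (w '' {x | (x : ℕ) < p} ∩ {v | q ≤ (v : ℕ)}).ncard := by
  rw [← Set.image_inter_preimage, Set.ncard_image_of_injective _ w.injective, rank,
    ← Set.ncard_coe_finset, coe_filter_univ]
  rfl

lemma rank_eq_rank_iff_image_eq :
    rank x p = rank y p ↔ x '' {i : Fin n | (i : ℕ) < p} = y '' {i : Fin n | (i : ℕ) < p} := by
  refine ⟨fun h => ?_, fun h => funext fun q => by rw [rank_eq_ncard, rank_eq_ncard, h]⟩
  ext v
  rw [image_eq_preimage_symm, image_eq_preimage_symm]
  change (x⁻¹ v : ℕ) < p ↔ (y⁻¹ v : ℕ) < p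
  rw [inv_lt_iff_rank_eq_succ, inv_lt_iff_rank_eq_succ, h]

lemma le_swap_apply_iff (hij : i ⋖ j) (hq : q ≠ j) (v : Fin n) :
    q ≤ (swap i j v : ℕ) ↔ q ≤ (v : ℕ) := by
  have hval := val_add_one_eq hij
  rw [swap_apply_def]
  split_ifs with hi hj
  · subst hi; omega
  · subst hj; omega
  · rfl

lemma rank_swap_mul_of_ne (hij : i ⋖ j) (hq : q ≠ j) (w : Perm (Fin n)) (p : ℕ) :
    rank (swap i j * w) p q = rank w p q := by
  simp only [rank, Perm.mul_apply, le_swap_apply_iff hij hq]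

lemma rank_of_ascent (hij : i ⋖ j) (hw : w⁻¹ i < w⁻¹ j) (p : ℕ) :
    rank w p j = (rank w p i + rank w p (j + 1)) / 2 := by
  have hi := rank_eq_rank_succ_add w p i
  have hj := rank_eq_rank_succ_add w p j
  rw [val_add_one_eq hij] at hi
  rw [Fin.lt_def] at hw
  split_ifs at hi hj <;> omega

lemma rank_of_descent (hij : i ⋖ j) (hw : w⁻¹ j < w⁻¹ i) (p : ℕ) :
    rank w p j = (rank w p i + rank w p (j + 1) + 1) / 2 := by
  have hi := rank_eq_rank_succ_add w p i
  have hj := rank_eq_rank_succ_add w p j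
  rw [val_add_one_eq hij] at hi
  rw [Fin.lt_def] at hw
  split_ifs at hi hj <;> omega

end Rank

section RaiseLower

/-- The Demazure product of the transposition `(i j)` with `w`, for `i ⋖ j`: the larger of `w` and
`(i j) * w` in the Bruhat order. -/
def raise (i j : Fin n) (w : Perm (Fin n)) : Perm (Fin n) :=
  if w⁻¹ i < w⁻¹ j then swap i j * w else w

/-- The smaller of `w` and `(i j) * w` in the Bruhat order, for `i ⋖ j`. -/
def lower (i j : Fin n) (w : Perm (Fin n)) : Perm (Fin n) :=
  if w⁻¹ j < w⁻¹ i then swap i j * w else w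

lemma raise_of_ascent (hw : w⁻¹ i < w⁻¹ j) : raise i j w = swap i j * w := if_pos hw

lemma raise_of_descent (hw : w⁻¹ j < w⁻¹ i) : raise i j w = w := if_neg hw.not_gt

lemma lower_of_ascent (hw : w⁻¹ i < w⁻¹ j) : lower i j w = w := if_neg hw.not_gt

lemma lower_of_descent (hw : w⁻¹ j < w⁻¹ i) : lower i j w = swap i j * w := if_pos hw

lemma ascent_or_descent (hij : i ≠ j) (w : Perm (Fin n)) : w⁻¹ i < w⁻¹ j ∨ w⁻¹ j < w⁻¹ i :=
  lt_or_gt_of_ne ((w⁻¹).injective.ne hij)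

lemma inv_swap_mul_apply_left (i j : Fin n) (w : Perm (Fin n)) :
    (swap i j * w)⁻¹ i = w⁻¹ j := by
  simp

lemma inv_swap_mul_apply_right (i j : Fin n) (w : Perm (Fin n)) :
    (swap i j * w)⁻¹ j = w⁻¹ i := by
  simp

lemma raise_descent (hij : i ≠ j) (w : Perm (Fin n)) :
    (raise i j w)⁻¹ j < (raise i j w)⁻¹ i := by
  rcases ascent_or_descent hij w with hw | hw
  · rwa [raise_of_ascent hw, inv_swap_mul_apply_left, inv_swap_mul_apply_right]
  · rwa [raise_of_descent hw]

lemma lower_ascent (hij : i ≠ j) (w : Perm (Fin n)) :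
    (lower i j w)⁻¹ i < (lower i j w)⁻¹ j := by
  rcases ascent_or_descent hij w with hw | hw
  · rwa [lower_of_ascent hw]
  · rwa [lower_of_descent hw, inv_swap_mul_apply_left, inv_swap_mul_apply_right]

lemma raise_lower (hij : i ≠ j) (w : Perm (Fin n)) : raise i j (lower i j w) = raise i j w := by
  rcases ascent_or_descent hij w with hw | hw
  · rw [lower_of_ascent hw]
  · rw [raise_of_ascent (lower_ascent hij w), lower_of_descent hw, swap_mul_self_mul,
      raise_of_descent hw]

lemma rank_raise_of_ne (hij : i ⋖ j) (hq : q ≠ j) (w : Perm (Fin n)) (p : ℕ) :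
    rank (raise i j w) p q = rank w p q := by
  unfold raise
  split_ifs
  · exact rank_swap_mul_of_ne hij hq w p
  · rfl

lemma rank_lower_of_ne (hij : i ⋖ j) (hq : q ≠ j) (w : Perm (Fin n)) (p : ℕ) :
    rank (lower i j w) p q = rank w p q := by
  unfold lower
  split_ifs
  · exact rank_swap_mul_of_ne hij hq w p
  · rfl

lemma rank_raise_right (hij : i ⋖ j) (w : Perm (Fin n)) (p : ℕ) :
    rank (raise i j w) p j = (rank w p i + rank w p (j + 1) + 1) / 2 := by
  rw [rank_of_descent hij (raise_descent hij.ne w),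
    rank_raise_of_ne hij (Fin.val_ne_of_ne hij.ne), rank_raise_of_ne hij (Nat.succ_ne_self _)]

lemma rank_lower_right (hij : i ⋖ j) (w : Perm (Fin n)) (p : ℕ) :
    rank (lower i j w) p j = (rank w p i + rank w p (j + 1)) / 2 := by
  rw [rank_of_ascent hij (lower_ascent hij.ne w),
    rank_lower_of_ne hij (Fin.val_ne_of_ne hij.ne), rank_lower_of_ne hij (Nat.succ_ne_self _)]

lemma rank_raise_congr (hij : i ⋖ j) (h : rank x p = rank y p) :
    rank (raise i j x) p = rank (raise i j y) p := by
  ext q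
  obtain rfl | hq := eq_or_ne q j
  · rw [rank_raise_right hij, rank_raise_right hij, h]
  · rw [rank_raise_of_ne hij hq, rank_raise_of_ne hij hq, h]

lemma rank_lower_congr (hij : i ⋖ j) (h : rank x p = rank y p) :
    rank (lower i j x) p = rank (lower i j y) p := by
  ext q
  obtain rfl | hq := eq_or_ne q j
  · rw [rank_lower_right hij, rank_lower_right hij, h]
  · rw [rank_lower_of_ne hij hq, rank_lower_of_ne hij hq, h]

lemma rank_le_rank_raise_iff (hij : i ⋖ j) :
    rank y ≤ rank (raise i j w) ↔ ∀ p q : ℕ, q ≠ j → rank y p q ≤ rank w p q := by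
  refine ⟨fun h p q hq => rank_raise_of_ne hij hq w p ▸ h p q, fun h p q => ?_⟩
  obtain rfl | hq := eq_or_ne q j
  · have hi := h p i (Fin.val_ne_of_ne hij.ne)
    have hj := h p (j + 1) (Nat.succ_ne_self _)
    calc rank y p j ≤ rank (raise i j y) p j := by
          rcases ascent_or_descent hij.ne y with hy | hy
          · rw [rank_raise_right hij, rank_of_ascent hij hy]; omega
          · rw [raise_of_descent hy]
      _ ≤ rank (raise i j w) p j := by
          rw [rank_raise_right hij, rank_raise_right hij]; omega
  · rw [rank_raise_of_ne hij hq]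
    exact h p q hq

lemma rank_lower_le_rank_iff (hij : i ⋖ j) :
    rank (lower i j y) ≤ rank w ↔ ∀ p q : ℕ, q ≠ j → rank y p q ≤ rank w p q := by
  refine ⟨fun h p q hq => rank_lower_of_ne hij hq y p ▸ h p q, fun h p q => ?_⟩
  obtain rfl | hq := eq_or_ne q j
  · have hi := h p i (Fin.val_ne_of_ne hij.ne)
    have hj := h p (j + 1) (Nat.succ_ne_self _)
    calc rank (lower i j y) p j ≤ rank (lower i j w) p j := by
          rw [rank_lower_right hij, rank_lower_right hij]; omega
      _ ≤ rank w p j := by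
          rcases ascent_or_descent hij.ne w with hw | hw
          · rw [lower_of_ascent hw]
          · rw [rank_lower_right hij, rank_of_descent hij hw]; omega
  · rw [rank_lower_of_ne hij hq]
    exact h p q hq

-- All cases of the lifting property of the Bruhat order at once.
lemma rank_lower_le_rank_iff_rank_le_rank_raise (hij : i ⋖ j) :
    rank (lower i j y) ≤ rank w ↔ rank y ≤ rank (raise i j w) :=
  (rank_lower_le_rank_iff hij).trans (rank_le_rank_raise_iff hij).symm

lemma rank_le_rank_raise (hij : i ⋖ j) (w : Perm (Fin n)) : rank w ≤ rank (raise i j w) :=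
  (rank_le_rank_raise_iff hij).2 fun _ _ _ => le_rfl

lemma rank_raise_mono (hij : i ⋖ j) (h : rank x ≤ rank y) :
    rank (raise i j x) ≤ rank (raise i j y) :=
  (rank_le_rank_raise_iff hij).2 fun p q hq => (rank_raise_of_ne hij hq x p).trans_le (h p q)

end RaiseLower

section Length

lemma swap_lt_swap_iff (hij : i ⋖ j) (u v : Fin n) :
    swap i j u < swap i j v ↔ (u = j ∧ v = i) ∨ (u < v ∧ ¬(u = i ∧ v = j)) := by
  have hval := val_add_one_eq hij
  simp only [swap_apply_def, Fin.ext_iff, Fin.lt_def]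
  split_ifs <;> omega

lemma invCount_raise_of_ascent (hij : i ⋖ j) (hw : w⁻¹ i < w⁻¹ j) :
    invCount n (raise i j w) = invCount n w + 1 := by
  have hnew : (w⁻¹ i, w⁻¹ j) ∉ ({t | t.1 < t.2 ∧ w t.2 < w t.1} : Finset (Fin n × Fin n)) := by
    simpa using fun _ => hij.le
  rw [raise_of_ascent hw, invCount, invCount, ← card_insert_of_notMem hnew]
  congr 1
  ext ⟨a, b⟩
  simp only [mem_filter, mem_univ, true_and, mem_insert, Prod.mk.injEq, Perm.mul_apply,
    swap_lt_swap_iff hij, Perm.eq_inv_iff_eq]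
  have hab : a < b → ¬(w b = i ∧ w a = j) := by
    rintro hab ⟨rfl, rfl⟩
    exact hab.not_gt (by simpa using hw)
  have hba : w a = i ∧ w b = j → a < b := by
    rintro ⟨rfl, rfl⟩
    simpa using hw
  tauto

lemma invCount_lower_of_descent (hij : i ⋖ j) (hw : w⁻¹ j < w⁻¹ i) :
    invCount n (lower i j w) + 1 = invCount n w := by
  rw [← invCount_raise_of_ascent hij (lower_ascent hij.ne w), raise_lower hij.ne,
    raise_of_descent hw]

lemma invCount_swap_mul_le (hij : i ⋖ j) (w : Perm (Fin n)) :
    invCount n (swap i j * w) ≤ invCount n w + 1 := by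
  rcases ascent_or_descent hij.ne w with hw | hw
  · rw [← raise_of_ascent hw, invCount_raise_of_ascent hij hw]
  · rw [← lower_of_descent hw, ← invCount_lower_of_descent hij hw]
    omega

lemma invCount_one : invCount n 1 = 0 := by
  rw [invCount, card_eq_zero, filter_eq_empty_iff]
  exact fun _ _ h => h.1.not_gt h.2

lemma exists_descent (hw : w ≠ 1) : ∃ i j : Fin n, i ⋖ j ∧ w⁻¹ j < w⁻¹ i := by
  contrapose! hw
  have hmono : StrictMono (w⁻¹ : Perm (Fin n)) := (strictMono_iff_forall_covBy _).2 fun i j hij =>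
    (ascent_or_descent hij.ne w).resolve_right (hw i j hij).not_gt
  exact inv_eq_one.1 (DFunLike.coe_injective hmono.eq_id)

@[elab_as_elim]
lemma raise_induction {motive : Perm (Fin n) → Prop} (one : motive 1)
    (raise : ∀ (i j : Fin n) (w : Perm (Fin n)), i ⋖ j → w⁻¹ i < w⁻¹ j → motive w →
      motive (raise i j w))
    (w : Perm (Fin n)) : motive w := by
  induction hm : invCount n w using Nat.strong_induction_on generalizing w with
  | _ m ih =>
    by_cases hw : w = 1
    · rwa [hw]
    obtain ⟨i, j, hij, hdesc⟩ := exists_descent hw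
    rw [← raise_of_descent hdesc, ← raise_lower hij.ne]
    have hlt : invCount n (lower i j w) < m := by
      rw [← hm, ← invCount_lower_of_descent hij hdesc]
      exact Nat.lt_succ_self _
    exact raise i j _ hij (lower_ascent hij.ne w) (ih _ hlt _ rfl)

end Length

section ReducedWord

variable {l l' : List (Fin n)}

lemma sgen_eq_swap (hij : i ⋖ j) : sgen n i = swap i j := by
  have hval := val_add_one_eq hij
  simp [sgen, hval]

lemma exists_covBy (hi : (i : ℕ) + 1 < n) : ∃ j, i ⋖ j := ⟨⟨i + 1, hi⟩, by simp⟩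

lemma invCount_prod_le (hl : ∀ i ∈ l, (i : ℕ) + 1 < n) :
    invCount n (l.map (sgen n)).prod ≤ l.length := by
  induction l with
  | nil => simp [invCount_one]
  | cons i l ih =>
    obtain ⟨hi, hl⟩ := List.forall_mem_cons.1 hl
    obtain ⟨j, hij⟩ := exists_covBy hi
    rw [List.map_cons, List.prod_cons, sgen_eq_swap hij, List.length_cons]
    exact (invCount_swap_mul_le hij _).trans (Nat.succ_le_succ (ih hl))

lemma isReducedWord_nil_iff : IsReducedWord n [] w ↔ w = 1 := by
  refine ⟨fun h => h.2.1.symm, ?_⟩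
  rintro rfl
  exact ⟨by simp, rfl, invCount_one.symm⟩

lemma isReducedWord_cons_iff :
    IsReducedWord n (i :: l) w ↔
      ∃ j x, i ⋖ j ∧ x⁻¹ i < x⁻¹ j ∧ raise i j x = w ∧ IsReducedWord n l x := by
  constructor
  · rintro ⟨hmem, rfl, hlen⟩
    obtain ⟨hi, hl⟩ := List.forall_mem_cons.1 hmem
    obtain ⟨j, hij⟩ := exists_covBy hi
    have hle := invCount_prod_le hl
    rw [List.map_cons, List.prod_cons, sgen_eq_swap hij] at hlen ⊢
    rw [List.length_cons] at hlen
    set x := (l.map (sgen n)).prod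
    have hasc : x⁻¹ i < x⁻¹ j := (ascent_or_descent hij.ne x).resolve_right fun hdesc => by
      have hlower := invCount_lower_of_descent hij hdesc
      rw [lower_of_descent hdesc] at hlower
      omega
    rw [← raise_of_ascent hasc, invCount_raise_of_ascent hij hasc] at hlen
    exact ⟨j, x, hij, hasc, raise_of_ascent hasc, hl, rfl, Nat.succ_injective hlen⟩
  · rintro ⟨j, x, hij, hasc, rfl, hl, rfl, hlen⟩
    refine ⟨List.forall_mem_cons.2 ⟨val_add_one_eq hij ▸ j.isLt, hl⟩, ?_, ?_⟩
    · rw [List.map_cons, List.prod_cons, sgen_eq_swap hij, raise_of_ascent hasc]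
    · rw [List.length_cons, hlen, invCount_raise_of_ascent hij hasc]

lemma rank_le_of_sublist (hll' : l.Sublist l') (hl : IsReducedWord n l y)
    (hl' : IsReducedWord n l' w) : rank y ≤ rank w := by
  induction hll' generalizing y w with
  | slnil => rw [isReducedWord_nil_iff.1 hl, isReducedWord_nil_iff.1 hl']
  | cons i _ ih =>
    obtain ⟨j, x, hij, -, rfl, hx⟩ := isReducedWord_cons_iff.1 hl'
    exact (ih hl hx).trans (rank_le_rank_raise hij x)
  | cons_cons i _ ih =>
    obtain ⟨j, x, hij, -, rfl, hx⟩ := isReducedWord_cons_iff.1 hl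
    obtain ⟨j', z, hij', -, rfl, hz⟩ := isReducedWord_cons_iff.1 hl'
    obtain rfl := hij.unique_right hij'
    exact rank_raise_mono hij (ih hx hz)

lemma rank_one_le (w : Perm (Fin n)) : rank (1 : Perm (Fin n)) ≤ rank w := by
  induction w using raise_induction with
  | one => exact le_rfl
  | raise i j w hij _ ih => exact ih.trans (rank_le_rank_raise hij w)

lemma bruhatLE_of_rank_le (h : rank y ≤ rank w) : bruhatLE n y w := by
  induction w using raise_induction generalizing y with
  | one =>
    have hnil := isReducedWord_nil_iff.2 (rfl : (1 : Perm (Fin n)) = 1)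
    rw [rank_injective (h.antisymm (rank_one_le y))]
    exact ⟨[], [], hnil, hnil, .slnil⟩
  | raise i j w hij hw ih =>
    obtain ⟨l, l', hl', hl, hsub⟩ := ih ((rank_lower_le_rank_iff_rank_le_rank_raise hij).2 h)
    have hcons' := isReducedWord_cons_iff.2 ⟨j, w, hij, hw, rfl, hl'⟩
    rcases ascent_or_descent hij.ne y with hy | hy
    · rw [lower_of_ascent hy] at hl
      exact ⟨l, i :: l', hcons', hl, hsub.cons i⟩
    · have hcons := isReducedWord_cons_iff.2 ⟨j, _, hij, lower_ascent hij.ne y, rfl, hl⟩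
      rw [raise_lower hij.ne, raise_of_descent hy] at hcons
      exact ⟨i :: l, i :: l', hcons', hcons, hsub.cons_cons i⟩

theorem bruhatLE_iff_rank_le : bruhatLE n y w ↔ rank y ≤ rank w :=
  ⟨fun ⟨_, _, hl', hl, hsub⟩ => rank_le_of_sublist hsub hl hl', bruhatLE_of_rank_le⟩

end ReducedWord

section ParabolicCoset

variable {K : Set ℕ} {σ ν : Perm (Fin n)}

/-- The left coset of `σ` modulo the standard parabolic subgroup generated by the simple
transpositions other than those exchanging positions `k - 1` and `k`, for `k ∈ K`. For `K = {k}`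
that subgroup is `S_k × S_{n-k}`. Positions are counted from `0`. -/
def parabolicCoset (K : Set ℕ) (σ : Perm (Fin n)) : Set (Perm (Fin n)) :=
  {w | ∀ k ∈ K, w '' {i : Fin n | (i : ℕ) < k} = σ '' {i : Fin n | (i : ℕ) < k}}

lemma self_mem_parabolicCoset (K : Set ℕ) (σ : Perm (Fin n)) : σ ∈ parabolicCoset K σ :=
  fun _ _ => rfl

lemma mem_parabolicCoset_iff_eqOn_rank :
    w ∈ parabolicCoset K σ ↔ Set.EqOn (rank w) (rank σ) K :=
  forall₂_congr fun _ _ => rank_eq_rank_iff_image_eq.symm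

lemma raise_mem_parabolicCoset (hij : i ⋖ j) (hw : w ∈ parabolicCoset K σ) :
    raise i j w ∈ parabolicCoset K (raise i j σ) := by
  rw [mem_parabolicCoset_iff_eqOn_rank] at hw ⊢
  exact fun k hk => rank_raise_congr hij (hw hk)

lemma lower_mem_parabolicCoset (hij : i ⋖ j) (hw : w ∈ parabolicCoset K σ) :
    lower i j w ∈ parabolicCoset K (lower i j σ) := by
  rw [mem_parabolicCoset_iff_eqOn_rank] at hw ⊢
  exact fun k hk => rank_lower_congr hij (hw hk)

lemma parabolicCoset_eq (hw : w ∈ parabolicCoset K σ) :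
    parabolicCoset K w = parabolicCoset K σ :=
  Set.ext fun _ => forall₂_congr fun k hk => by rw [hw k hk]

lemma parabolicCoset_raise_eq (hij : i ⋖ j) (hw : w ∈ parabolicCoset K σ) (hdesc : w⁻¹ j < w⁻¹ i) :
    parabolicCoset K (raise i j σ) = parabolicCoset K σ := by
  have hraise := raise_mem_parabolicCoset hij hw
  rw [raise_of_descent hdesc] at hraise
  rw [← parabolicCoset_eq hraise, parabolicCoset_eq hw]

lemma mem_parabolicCoset_of_rank_le_of_rank_le (hz : z ∈ parabolicCoset K σ)
    (hσw : rank σ ≤ rank w) (hwz : rank w ≤ rank z) : w ∈ parabolicCoset K σ := by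
  rw [mem_parabolicCoset_iff_eqOn_rank] at hz ⊢
  exact fun k hk => ((hwz k).trans_eq (hz hk)).antisymm (hσw k)

theorem exists_mem_parabolicCoset_forall_rank_le_iff (hσν : rank σ ≤ rank ν) :
    ∃ η ∈ parabolicCoset K σ, ∀ y ∈ parabolicCoset K σ, rank y ≤ rank ν ↔ rank y ≤ rank η := by
  induction ν using raise_induction generalizing σ with
  | one =>
    obtain rfl := rank_injective (hσν.antisymm (rank_one_le σ))
    exact ⟨1, self_mem_parabolicCoset K 1, fun _ _ => Iff.rfl⟩
  | raise i j w hij _ ih =>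
    have galois {x z : Perm (Fin n)} : rank (lower i j x) ≤ rank z ↔ rank x ≤ rank (raise i j z) :=
      rank_lower_le_rank_iff_rank_le_rank_raise hij
    obtain ⟨η, hη, hmax⟩ := ih (galois.2 hσν)
    have hmax_lower (y) (hy : y ∈ parabolicCoset K σ) :
        rank y ≤ rank (raise i j w) ↔ rank (lower i j y) ≤ rank η := by
      rw [← galois, hmax _ (lower_mem_parabolicCoset hij hy)]
    by_cases hdesc : ∃ z ∈ parabolicCoset K σ, z⁻¹ j < z⁻¹ i
    · obtain ⟨z, hz, hzdesc⟩ := hdesc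
      refine ⟨raise i j η, ?_, fun y hy => (hmax_lower y hy).trans galois⟩
      rw [← parabolicCoset_raise_eq hij hz hzdesc, ← raise_lower hij.ne σ]
      exact raise_mem_parabolicCoset hij hη
    · have hlower (y) (hy : y ∈ parabolicCoset K σ) : lower i j y = y :=
        lower_of_ascent <| (ascent_or_descent hij.ne y).resolve_right fun h => hdesc ⟨y, hy, h⟩
      rw [hlower σ (self_mem_parabolicCoset K σ)] at hη
      exact ⟨η, hη, fun y hy => by rw [hmax_lower y hy, hlower y hy]⟩

end ParabolicCoset

end Bruhat

open Bruhat in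
theorem coset_inter_interval_general {n : ℕ} (K : Set ℕ) {σ ν : Equiv.Perm (Fin n)}
    (hσν : bruhatLE n σ ν) :
    ∃ η : Equiv.Perm (Fin n),
      {μ : Equiv.Perm (Fin n) | bruhatLE n σ μ ∧ bruhatLE n μ ν ∧ μ ∈ parabolicCoset K σ}
        = {μ : Equiv.Perm (Fin n) | bruhatLE n σ μ ∧ bruhatLE n μ η} := by
  simp only [bruhatLE_iff_rank_le] at hσν ⊢
  obtain ⟨η, hη, hmax⟩ := exists_mem_parabolicCoset_forall_rank_le_iff (K := K) hσν
  refine ⟨η, Set.ext fun μ => and_congr_right fun hσμ => ⟨?_, fun hμη => ?_⟩⟩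
  · rintro ⟨hμν, hμσ⟩
    exact (hmax μ hμσ).1 hμν
  · have hμσ := mem_parabolicCoset_of_rank_le_of_rank_le hη hσμ hμη
    exact ⟨(hmax μ hμσ).2 hμη, hμσ⟩

/-- For `σ ≤ ν` in Bruhat order and `1 ≤ k < n`, the intersection of
the coset `σ(S_k × S_{n-k})` — all `μ` whose first `k` values form the same set as
those of `σ` — with the Bruhat interval `[σ, ν]` is itself a Bruhat interval `[σ, η]`;
in particular it has a unique maximal element. -/
theorem coset_inter_interval (n k : ℕ) (hk1 : 1 ≤ k) (hk : k < n)
    (σ ν : Equiv.Perm (Fin n)) (hσν : bruhatLE n σ ν) :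
    ∃ η : Equiv.Perm (Fin n),
      {μ : Equiv.Perm (Fin n) | bruhatLE n σ μ ∧ bruhatLE n μ ν ∧
          (⇑μ) '' {i : Fin n | (i : ℕ) < k} = (⇑σ) '' {i : Fin n | (i : ℕ) < k}}
        = {μ : Equiv.Perm (Fin n) | bruhatLE n σ μ ∧ bruhatLE n μ η} := by
  simpa [Bruhat.parabolicCoset] using coset_inter_interval_general {k} hσν
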